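/- For all integers r,q ≥ 1, the permutation σ_{rq} satisfies σ_{rq}(1) = 1 and σ_{rq}(N) = N (dissipativity), and its inverse satisfies the following arc conditions: (lower rainbow) σ_{rq}^{−1}(n) + σ_{rq}^{−1}(n+1) = N+2 for every even n with 2 ≤ n ≤ N−1; (upper left p-nest, p = r(q+1)) σ_{rq}^{−1}(n) + σ_{rq}^{−1}(n+1) = 2r(q+1)+1 for every odd n of the form n = 2(j+(r+1)k)+1 with 0 ≤ j ≤ r−1 and 0 ≤ k ≤ q; (upper right q-nest) σ_{rq}^{−1}(n) + σ_{rq}^{−1}(n+1) = 4r(q+1)+2q+1 for every odd n of the form n = 2(r+(r+1)k)+1 with 0 ≤ k ≤ q−1. -/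

import Mathlib

/-- Morse numbers `i_j` of a permutation `σ` of `{1,…,N}` (extended to `ℕ`),
via the recursion `i_1 = 0`,
`i_{j+1} = i_j + (-1)^(j+1) * sign (σ⁻¹(j+1) - σ⁻¹(j))`. -/
def morse (σ : Equiv.Perm ℕ) : ℕ → ℤ
  | 0 => 0
  | 1 => 0
  | (j+2) => morse σ (j+1) +
      (-1)^(j+2) * Int.sign ((σ.symm (j+2) : ℤ) - (σ.symm (j+1) : ℤ))

/-- Zero numbers `z_{j k}`, recursion in the first index `j`, second index `k` fixed:
`z_{1k} = 0`, `z_{kk} = i_k`, `z_{k+1,k} = min (i_k, i_{k+1})`, and otherwise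
`z_{j+1,k} = z_{jk} + ((-1)^(j+1)/2) * (sign (σ⁻¹(j+1) - σ⁻¹(k)) - sign (σ⁻¹(j) - σ⁻¹(k)))`. -/
def zrec (σ : Equiv.Perm ℕ) (k : ℕ) : ℕ → ℤ
  | 0 => 0
  | 1 => 0
  | (j+2) =>
      if j+2 = k then morse σ k
      else if j+1 = k then min (morse σ k) (morse σ (k+1))
      else zrec σ k (j+1) +
        ((-1)^(j+2) * (Int.sign ((σ.symm (j+2) : ℤ) - (σ.symm k : ℤ))
          - Int.sign ((σ.symm (j+1) : ℤ) - (σ.symm k : ℤ)))) / 2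

/-- The zero number `z_{m n}`. -/
def zfun (σ : Equiv.Perm ℕ) (m n : ℕ) : ℤ := zrec σ n m

/-- The connection digraph of a dissipative Morse permutation `σ` of `{1,…,N}`:
an edge `m ⤳ n` iff `i_m = i_n + 1` and no `w` strictly between `m` and `n`
blocks, i.e. satisfies `z_{mw} = z_{wn} = z_{mn}`. -/
def hasEdge (N : ℕ) (σ : Equiv.Perm ℕ) (m n : ℕ) : Prop :=
  1 ≤ m ∧ m ≤ N ∧ 1 ≤ n ∧ n ≤ N ∧
  morse σ m = morse σ n + 1 ∧
  ¬ ∃ w : ℕ, min m n < w ∧ w < max m n ∧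
      zfun σ m w = zfun σ w n ∧ zfun σ w n = zfun σ m n

/-- A dissipative permutation of `{1,…,N}`. -/
def Dissipative (N : ℕ) (σ : Equiv.Perm ℕ) : Prop :=
  Set.BijOn σ (Set.Icc 1 N) (Set.Icc 1 N) ∧ σ 1 = 1 ∧ σ N = N

/-- The Morse property: all Morse numbers are nonnegative. -/
def MorseProp (N : ℕ) (σ : Equiv.Perm ℕ) : Prop :=
  ∀ j, 1 ≤ j → j ≤ N → 0 ≤ morse σ j

/-- Morse counts `μ(i) = #{j ∈ {1,…,N} : i_j = i}`. -/
def morseCount (N : ℕ) (σ : Equiv.Perm ℕ) (i : ℤ) : ℕ :=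
  ((Finset.Icc 1 N).filter (fun j => morse σ j = i)).card

/-- The primitive 3-nose permutation `σ_{rq}` of `{1,…,N}`, `N = 2(r+1)(q+1)-1`,
characterized by its defining relations, extended to a permutation of `ℕ`
fixing everything outside `{1,…,N}`. -/
def SigmaRQ (r q : ℕ) (σ : Equiv.Perm ℕ) : Prop :=
  (∀ a, a ∉ Set.Icc 1 (2*(r+1)*(q+1) - 1) → σ a = a) ∧
  (∀ j k, j ≤ r → k ≤ q →
    σ (2*((q+1)*j+k)+1) = 2*(j+(r+1)*k)+1) ∧
  (∀ j k, j ≤ r → k ≤ q → ¬(j = 0 ∧ k = 0) →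
    σ (2*((q+1)*(r-j)+(q-k)+1)) = 2*(j+(r+1)*k))

/-- Tags `A`, `B` of equilibrium labels `A^j_k`, `B^j_k`. -/
inductive Tag | A | B
deriving DecidableEq

/-- The axis position (`h_1`-position) of the label `L^j_k` for parameters `(r,q)`. -/
def axisPos (r q : ℕ) : Tag → ℕ → ℕ → ℕ
  | Tag.A, j, k => if Odd j then (q+1)*(j-1)+k+1 else (q+1)*(2*r+1-j)+(q-k)+1
  | Tag.B, j, k => if Odd j then (q+1)*j+(q-k)+1 else (q+1)*(2*r-j)+k+1

/-- The meander position (`h_0`-position) of the label `L^j_k` for parameters `(r,q)`. -/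
def meanderPos (r q : ℕ) : Tag → ℕ → ℕ → ℕ
  | Tag.A, j, k => if Odd k then (r+1)*(2*q+1-k)+(2*r+1-j) else (r+1)*k+j
  | Tag.B, j, k => if Odd k then (r+1)*(2*q+1-k)+j else (r+1)*(k+1)+(r-j)

/-- The suspension `σ̃` of a dissipative permutation `σ` of `{1,…,N}`:
`σ̃(1) = 1`, `σ̃(N+2) = N+2`, and `σ̃(a+1) = N+2 - σ(a)` for `1 ≤ a ≤ N`. -/
def IsSuspension (N : ℕ) (σ σt : Equiv.Perm ℕ) : Prop :=
  σt 1 = 1 ∧ σt (N+2) = N+2 ∧ ∀ a, 1 ≤ a → a ≤ N → σt (a+1) = N+2 - σ a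

/-- The label `A^0_0` is the distinguished (formal) vertex `⋆`. -/
def IsStar (L : Tag) (j k : ℕ) : Prop := L = Tag.A ∧ j = 0 ∧ k = 0

/-- Tag swap `A ↔ B`, used by the reversor. -/
def tagSwap : Tag → Tag
  | Tag.A => Tag.B
  | Tag.B => Tag.A

/-!
Write `a = j + (r+1) k` and let `b = (q+1) j + k` be its digit reversal in the mixed radix
`(r+1, q+1)`. The defining relations of `σ` say that `σ⁻¹ (2a+1) = 2b + 1` and
`σ⁻¹ (2a) = N + 1 - 2b`. In `σ⁻¹ n + σ⁻¹ (n+1)` only the difference of two values of `b` survives: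
it is zero on the lower rainbow, `b` increases by `q + 1` under `(j, k) ↦ (j+1, k)` on the upper
left nest, and decreases by `r (q+1) - 1` under `(r, k) ↦ (0, k+1)` on the upper right nest.
-/

theorem exists_eq_add_mul_of_lt_mul {a b m : ℕ} (hm : m < a * b) :
    ∃ i < a, ∃ k < b, m = i + a * k :=
  ⟨m % a, Nat.mod_lt m (Nat.pos_of_lt_mul_right hm), m / a, Nat.div_lt_of_lt_mul hm,
    (Nat.mod_add_div m a).symm⟩

namespace SigmaRQ

variable {r q j k n : ℕ} {σ : Equiv.Perm ℕ}

theorem symm_apply_odd (hσ : SigmaRQ r q σ) (hj : j ≤ r) (hk : k ≤ q) :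
    σ.symm (2 * (j + (r + 1) * k) + 1) = 2 * ((q + 1) * j + k) + 1 :=
  (Equiv.symm_apply_eq σ).mpr (hσ.2.1 j k hj hk).symm

theorem symm_apply_even_add (hσ : SigmaRQ r q σ) (hj : j ≤ r) (hk : k ≤ q)
    (hjk : ¬(j = 0 ∧ k = 0)) :
    σ.symm (2 * (j + (r + 1) * k)) + 2 * ((q + 1) * j + k) = 2 * (r + 1) * (q + 1) := by
  have hsymm : σ.symm (2 * (j + (r + 1) * k)) = 2 * ((q + 1) * (r - j) + (q - k) + 1) :=
    (Equiv.symm_apply_eq σ).mpr (hσ.2.2 j k hj hk hjk).symm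
  obtain ⟨d, rfl⟩ := Nat.exists_eq_add_of_le hj
  obtain ⟨e, rfl⟩ := Nat.exists_eq_add_of_le hk
  rw [hsymm, Nat.add_sub_cancel_left, Nat.add_sub_cancel_left]
  ring

theorem apply_one (hσ : SigmaRQ r q σ) : σ 1 = 1 := by
  simpa using hσ.2.1 0 0 r.zero_le q.zero_le

theorem apply_last (hσ : SigmaRQ r q σ) :
    σ (2 * (r + 1) * (q + 1) - 1) = 2 * (r + 1) * (q + 1) - 1 := by
  have hlast : 2 * (r + 1) * (q + 1) - 1 = 2 * ((q + 1) * r + q) + 1 :=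
    Nat.sub_eq_of_eq_add (by ring)
  rw [hlast, hσ.2.1 r q le_rfl le_rfl]
  ring

theorem symm_add_symm_lower_rainbow (hσ : SigmaRQ r q σ) (hn : Even n) (hn0 : n ≠ 0)
    (hnN : n < 2 * (r + 1) * (q + 1)) :
    σ.symm n + σ.symm (n + 1) = 2 * (r + 1) * (q + 1) + 1 := by
  obtain ⟨m, rfl⟩ := hn.two_dvd
  obtain ⟨j, hj, k, hk, rfl⟩ : ∃ j < r + 1, ∃ k < q + 1, m = j + (r + 1) * k :=
    exists_eq_add_mul_of_lt_mul (by linarith)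
  have hjk : ¬(j = 0 ∧ k = 0) := by
    rintro ⟨rfl, rfl⟩
    exact hn0 rfl
  rw [Nat.lt_succ_iff] at hj hk
  linarith [hσ.symm_apply_odd hj hk, hσ.symm_apply_even_add hj hk hjk]

theorem symm_add_symm_upper_left_nest (hσ : SigmaRQ r q σ) (hj : j < r) (hk : k ≤ q) :
    σ.symm (2 * (j + (r + 1) * k) + 1) + σ.symm (2 * (j + (r + 1) * k) + 1 + 1) =
      2 * r * (q + 1) + 1 := by
  have hodd := hσ.symm_apply_odd hj.le hk
  have heven := hσ.symm_apply_even_add (j := j + 1) hj hk (by simp)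
  have hsucc : 2 * (j + (r + 1) * k) + 1 + 1 = 2 * (j + 1 + (r + 1) * k) := by ring
  rw [hsucc]
  linarith

theorem symm_add_symm_upper_right_nest (hσ : SigmaRQ r q σ) (hk : k < q) :
    σ.symm (2 * (r + (r + 1) * k) + 1) + σ.symm (2 * (r + (r + 1) * k) + 1 + 1) =
      4 * r * (q + 1) + 2 * q + 1 := by
  have hodd := hσ.symm_apply_odd le_rfl hk.le
  have heven := hσ.symm_apply_even_add (k := k + 1) r.zero_le hk (by simp)
  have hsucc : 2 * (r + (r + 1) * k) + 1 + 1 = 2 * (0 + (r + 1) * (k + 1)) := by ring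
  rw [hsucc]
  linarith

end SigmaRQ

/-- `σ_{rq}` is dissipative, and its inverse satisfies the
lower-rainbow, upper-left `p`-nest and upper-right `q`-nest arc conditions. -/
theorem stmt_1 (r q : ℕ) (hr : 1 ≤ r) (hq : 1 ≤ q)
    (σ : Equiv.Perm ℕ) (hσ : SigmaRQ r q σ) :
    σ 1 = 1 ∧ σ (2*(r+1)*(q+1)-1) = 2*(r+1)*(q+1)-1 ∧
    -- lower rainbow: for every even n, 2 ≤ n ≤ N-1
    (∀ n, 2 ≤ n → n ≤ 2*(r+1)*(q+1)-2 → Even n →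
      σ.symm n + σ.symm (n+1) = 2*(r+1)*(q+1)+1) ∧
    -- upper left p-nest, p = r(q+1): odd n = 2(j+(r+1)k)+1, 0 ≤ j ≤ r-1, 0 ≤ k ≤ q
    (∀ j k, j ≤ r-1 → k ≤ q →
      σ.symm (2*(j+(r+1)*k)+1) + σ.symm (2*(j+(r+1)*k)+1+1) = 2*r*(q+1)+1) ∧
    -- upper right q-nest: odd n = 2(r+(r+1)k)+1, 0 ≤ k ≤ q-1
    (∀ k, k ≤ q-1 →
      σ.symm (2*(r+(r+1)*k)+1) + σ.symm (2*(r+(r+1)*k)+1+1) = 4*r*(q+1)+2*q+1) := by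
  refine ⟨hσ.apply_one, hσ.apply_last, fun n hn hnN heven => ?_, fun j k hj hk => ?_,
    fun k hk => ?_⟩
  · exact hσ.symm_add_symm_lower_rainbow heven (by omega) (by omega)
  · exact hσ.symm_add_symm_upper_left_nest (Nat.lt_of_le_sub_one hr hj) hk
  · exact hσ.symm_add_symm_upper_right_nest (Nat.lt_of_le_sub_one hq hk)
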